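/- arXiv:1609.01919 — 2 statements merged into one kernel-verified Lean document; each statement's English description precedes it below -/
import Mathlib

section
/- Suppose Ψ : (ℕ → ℚ) → ℕ → ℕ is a uniform modulus of convergence for monotone sequences in the unit interval, i.e., for every nondecreasing c : ℕ → ℚ with 0 ≤ c n ≤ 1 for all n and every k : ℕ, one has |c N − c M| ≤ 1/(k+1) for all N, M ≥ Ψ c k. Then for every f : ℕ → ℕ, if there exists n with f n = 0, then there exists m ≤ Ψ (t f) 2 with f m = 0. In particular, the functional f ↦ (least m ≤ Ψ (t f) 2 with f m = 0, and 0 if no such m exists) satisfies Feferman's mu-property. -/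
/-- The monotone rational sequence associated to `f : ℕ → ℕ`:
`t f k = 0` if `f i ≠ 0` for all `i ≤ k`, and `t f k = 1 - 2⁻ᵏ` otherwise. -/
def t (f : ℕ → ℕ) (k : ℕ) : ℚ :=
  if ∀ i ≤ k, f i ≠ 0 then 0 else 1 - 1 / 2 ^ k

/-- Feferman's mu-property: if `f` has a zero, then `μ f` points to a zero of `f`. -/
def FefermanMu (μ : (ℕ → ℕ) → ℕ) : Prop :=
  ∀ f : ℕ → ℕ, (∃ n, f n = 0) → f (μ f) = 0

/-!
If `f` has a zero then `t f` tends to `1`, while `t f` is still `0` at every index below the first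
zero. At such an index the remaining variation of `t f` is therefore at least `1`, so an index from
which `t f` varies by at most some `ε < 1` cannot lie below the first zero of `f`.
-/

section

open Filter Topology

variable {f : ℕ → ℕ} {n k : ℕ}

theorem t_eq_zero_of_forall_ne_zero (h : ∀ i ≤ k, f i ≠ 0) : t f k = 0 :=
  if_pos h

theorem t_eq_one_sub_of_apply_eq_zero (hn : f n = 0) (hnk : n ≤ k) : t f k = 1 - 1 / 2 ^ k :=
  if_neg fun h => h n hnk hn

theorem t_mem_Icc (f : ℕ → ℕ) (k : ℕ) : t f k ∈ Set.Icc 0 1 := by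
  have hpos : (0 : ℚ) ≤ 1 / 2 ^ k := by positivity
  have hle : (1 : ℚ) / 2 ^ k ≤ 1 := by
    simpa only [pow_zero, div_one] using
      one_div_pow_le_one_div_pow_of_le (one_le_two (α := ℚ)) k.zero_le
  unfold t
  split_ifs
  · exact ⟨le_rfl, zero_le_one⟩
  · exact ⟨sub_nonneg.mpr hle, sub_le_self 1 hpos⟩

theorem t_monotone (f : ℕ → ℕ) : Monotone (t f) := by
  intro k l hkl
  by_cases h : ∀ i ≤ k, f i ≠ 0
  · rw [t_eq_zero_of_forall_ne_zero h]
    exact (t_mem_Icc f l).1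
  · push Not at h
    obtain ⟨i, hik, hi⟩ := h
    rw [t_eq_one_sub_of_apply_eq_zero hi hik, t_eq_one_sub_of_apply_eq_zero hi (hik.trans hkl)]
    exact sub_le_sub_left (one_div_pow_le_one_div_pow_of_le one_le_two hkl) 1

theorem tendsto_t_one (hf : ∃ n, f n = 0) : Tendsto (t f) atTop (𝓝 1) := by
  obtain ⟨n, hn⟩ := hf
  have hpow : Tendsto (fun k : ℕ => (1 : ℚ) / 2 ^ k) atTop (𝓝 0) := by
    simpa only [one_div_pow] using
      tendsto_pow_atTop_nhds_zero_of_lt_one (𝕜 := ℚ) one_half_pos.le one_half_lt_one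
  have hlim : Tendsto (fun k : ℕ => 1 - (1 : ℚ) / 2 ^ k) atTop (𝓝 1) := by
    simpa only [sub_zero] using hpow.const_sub 1
  refine hlim.congr' ?_
  filter_upwards [eventually_ge_atTop n] with k hnk
  exact (t_eq_one_sub_of_apply_eq_zero hn hnk).symm

theorem exists_zero_le_of_abs_t_sub_le {ε : ℚ} (hε : ε < 1)
    (hk : ∀ N, k ≤ N → |t f N - t f k| ≤ ε) (hf : ∃ n, f n = 0) : ∃ m ≤ k, f m = 0 := by
  by_contra! hne
  have hbound : ∀ N, k ≤ N → t f N ≤ ε := fun N hN => by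
    simpa only [t_eq_zero_of_forall_ne_zero hne, sub_zero] using (le_abs_self _).trans (hk N hN)
  have hone_le : 1 ≤ ε :=
    le_of_tendsto (tendsto_t_one hf) ((eventually_ge_atTop k).mono hbound)
  exact hε.not_ge hone_le

end

theorem fefermanMu_find_of_bound {B : (ℕ → ℕ) → ℕ}
    (hB : ∀ f : ℕ → ℕ, (∃ n, f n = 0) → ∃ m ≤ B f, f m = 0) :
    FefermanMu (fun f => if h : ∃ m, m ≤ B f ∧ f m = 0 then Nat.find h else 0) := by
  intro f hf
  have hzero : ∃ m, m ≤ B f ∧ f m = 0 := hB f hf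
  simp only [dif_pos hzero]
  exact (Nat.find_spec hzero).2

theorem mu_from_uniform_modulus_general (B : (ℕ → ℕ) → ℕ) {ε : ℚ} (hε : ε < 1)
    (hB : ∀ f N, B f ≤ N → |t f N - t f (B f)| ≤ ε) :
    (∀ f : ℕ → ℕ, (∃ n, f n = 0) → ∃ m ≤ B f, f m = 0) ∧
    FefermanMu (fun f => if h : ∃ m, m ≤ B f ∧ f m = 0 then Nat.find h else 0) :=
  have hzero : ∀ f : ℕ → ℕ, (∃ n, f n = 0) → ∃ m ≤ B f, f m = 0 := fun f =>
    exists_zero_le_of_abs_t_sub_le hε (hB f)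
  ⟨hzero, fefermanMu_find_of_bound hzero⟩

/-- If `Ψ` is a uniform modulus of convergence for monotone sequences in the unit
interval, then for any `f` with a zero there is a zero of `f` below `Ψ (t f) 2`;
in particular the least such zero (and `0` if none exists) defines a functional
with Feferman's mu-property. -/
theorem mu_from_uniform_modulus (Ψ : (ℕ → ℚ) → ℕ → ℕ)
    (hΨ : ∀ c : ℕ → ℚ, (∀ n, c n ≤ c (n + 1)) → (∀ n, 0 ≤ c n ∧ c n ≤ 1) →
      ∀ k N M, Ψ c k ≤ N → Ψ c k ≤ M → |c N - c M| ≤ 1 / (k + 1)) :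
    (∀ f : ℕ → ℕ, (∃ n, f n = 0) → ∃ m ≤ Ψ (t f) 2, f m = 0) ∧
    FefermanMu (fun f =>
      if h : ∃ m, m ≤ Ψ (t f) 2 ∧ f m = 0 then Nat.find h else 0) :=
  mu_from_uniform_modulus_general (fun f => Ψ (t f) 2) (by norm_num) fun f N hN =>
    hΨ (t f) (fun n => t_monotone f n.le_succ) (t_mem_Icc f) 2 N (Ψ (t f) 2) hN le_rfl
end

section
/- Suppose ψ : Nat.Partrec.Code → ℕ → ℕ is a modulus-of-convergence functional for all computable monotone rational sequences in the unit interval, i.e., for every code d and every q : ℕ → ℚ such that d.eval k = Part.some (Encodable.encode (q k)) for all k, with q nondecreasing and 0 ≤ q k ≤ 1 for all k, one has |q N − q M| ≤ 1/(k+1) for all k and all N, M ≥ ψ d k. Then for every code e, every n : ℕ, and every code d such that d.eval k = Part.some (Encodable.encode (seq e n k)) for all k, the computation e on input n halts (i.e., (e.eval n).Dom) if and only if (Nat.Partrec.Code.evaln (ψ d 2) e n).isSome. In other words, ψ uniformly computes a bound for the halting problem. -/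
/-- The halting sequence associated to a partial recursive code `e` and input `n`:
`seq e n k = 1 - 2⁻ᵏ` if the step-bounded evaluation `evaln k e n` returns a value,
and `0` otherwise. -/
def seq (e : Nat.Partrec.Code) (n : ℕ) (k : ℕ) : ℚ :=
  if (Nat.Partrec.Code.evaln k e n).isSome then 1 - 1 / 2 ^ k else 0

/-!
If `e` halts on `n`, then `seq e n` converges to `1`. Hence, if all later terms stay within some
`ε < 1` of the term at stage `N`, that term cannot be `0`, which means that the computation has
already halted within `N` steps.
-/

section

open Filter hiding seq
open Topology Nat.Partrec Nat.Partrec.Code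

variable {e : Code} {n : ℕ}

theorem evaln_isSome_mono {k m : ℕ} (hkm : k ≤ m) (hk : (evaln k e n).isSome) :
    (evaln m e n).isSome := by
  obtain ⟨x, hx⟩ := Option.isSome_iff_exists.1 hk
  exact Option.isSome_iff_exists.2 ⟨x, evaln_mono hkm hx⟩

theorem eval_dom_iff_exists_evaln_isSome : (e.eval n).Dom ↔ ∃ k, (evaln k e n).isSome := by
  simp only [Part.dom_iff_mem, evaln_complete, Option.isSome_iff_exists, Option.mem_def]
  exact exists_comm

theorem seq_of_isSome {k : ℕ} (hk : (evaln k e n).isSome) : seq e n k = 1 - 1 / 2 ^ k :=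
  if_pos hk

theorem seq_of_not_isSome {k : ℕ} (hk : ¬(evaln k e n).isSome) : seq e n k = 0 :=
  if_neg hk

theorem seq_nonneg (e : Code) (n k : ℕ) : 0 ≤ seq e n k := by
  unfold seq
  split_ifs
  · exact sub_nonneg.2 (div_le_one_of_le₀ (one_le_pow₀ one_le_two) (by positivity))
  · exact le_rfl

theorem seq_le_one (e : Code) (n k : ℕ) : seq e n k ≤ 1 := by
  unfold seq
  split_ifs
  · exact sub_le_self 1 (by positivity)
  · exact zero_le_one

theorem monotone_seq (e : Code) (n : ℕ) : Monotone (seq e n) := by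
  intro k m hkm
  by_cases hk : (evaln k e n).isSome
  · rw [seq_of_isSome hk, seq_of_isSome (evaln_isSome_mono hkm hk)]
    gcongr
    exact one_le_two
  · rw [seq_of_not_isSome hk]
    exact seq_nonneg e n m

theorem tendsto_seq_of_dom (h : (e.eval n).Dom) : Tendsto (seq e n) atTop (𝓝 1) := by
  obtain ⟨k, hk⟩ := eval_dom_iff_exists_evaln_isSome.1 h
  have eventually_eq : (fun m ↦ 1 - (1 / 2 : ℚ) ^ m) =ᶠ[atTop] seq e n := by
    filter_upwards [eventually_ge_atTop k] with m hkm
    rw [seq_of_isSome (evaln_isSome_mono hkm hk), one_div_pow]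
  have tendsto_pow : Tendsto (fun m ↦ (1 / 2 : ℚ) ^ m) atTop (𝓝 0) :=
    tendsto_pow_atTop_nhds_zero_of_lt_one (by norm_num) (by norm_num)
  simpa only [sub_zero] using (tendsto_pow.const_sub 1).congr' eventually_eq

theorem eval_dom_iff_evaln_isSome_of_abs_seq_sub_le {N : ℕ} {ε : ℚ} (hε : ε < 1)
    (hN : ∀ M, N ≤ M → |seq e n M - seq e n N| ≤ ε) :
    (e.eval n).Dom ↔ (evaln N e n).isSome := by
  refine ⟨fun h ↦ ?_, fun h ↦ eval_dom_iff_exists_evaln_isSome.2 ⟨N, h⟩⟩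
  by_contra hnot
  have seq_le : ∀ᶠ M in atTop, seq e n M ≤ ε := by
    filter_upwards [eventually_ge_atTop N] with M hNM
    simpa only [seq_of_not_isSome hnot, sub_zero, abs_of_nonneg (seq_nonneg e n M)] using hN M hNM
  exact hε.not_ge (le_of_tendsto (tendsto_seq_of_dom h) seq_le)

theorem halting_bound_from_modulus_general (ψ : Code → ℕ → ℕ)
    (hψ : ∀ (d : Code) (q : ℕ → ℚ),
      (∀ k, d.eval k = Part.some (Encodable.encode (q k))) →
      (∀ k, q k ≤ q (k + 1)) → (∀ k, 0 ≤ q k ∧ q k ≤ 1) →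
      ∀ k N M, ψ d k ≤ N → ψ d k ≤ M → |q N - q M| ≤ 1 / ((k : ℚ) + 1))
    {k : ℕ} (hk : 0 < k) (e : Code) (n : ℕ) (d : Code)
    (hd : ∀ m, d.eval m = Part.some (Encodable.encode (seq e n m))) :
    (e.eval n).Dom ↔ (evaln (ψ d k) e n).isSome := by
  have precision_lt_one : 1 / ((k : ℚ) + 1) < 1 :=
    (div_lt_one (by positivity)).2 (lt_add_of_pos_left 1 (Nat.cast_pos.2 hk))
  refine eval_dom_iff_evaln_isSome_of_abs_seq_sub_le precision_lt_one fun M hM ↦ ?_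
  exact hψ d (seq e n) hd (fun m ↦ monotone_seq e n m.le_succ)
    (fun m ↦ ⟨seq_nonneg e n m, seq_le_one e n m⟩) k M (ψ d k) hM le_rfl

end

/-- If `ψ` is a modulus-of-convergence functional for all computable monotone
rational sequences in the unit interval (presented via codes computing their
encoded values), then `ψ` uniformly computes a bound for the halting problem:
for any code `d` computing the halting sequence `seq e n`, the code `e` halts on
input `n` iff the step-bounded evaluation with `ψ d 2` steps returns a value. -/
theorem halting_bound_from_modulus (ψ : Nat.Partrec.Code → ℕ → ℕ)
    (hψ : ∀ (d : Nat.Partrec.Code) (q : ℕ → ℚ),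
      (∀ k, d.eval k = Part.some (Encodable.encode (q k))) →
      (∀ k, q k ≤ q (k + 1)) → (∀ k, 0 ≤ q k ∧ q k ≤ 1) →
      ∀ k N M, ψ d k ≤ N → ψ d k ≤ M → |q N - q M| ≤ 1 / ((k : ℚ) + 1)) :
    ∀ (e : Nat.Partrec.Code) (n : ℕ) (d : Nat.Partrec.Code),
      (∀ k, d.eval k = Part.some (Encodable.encode (seq e n k))) →
      ((e.eval n).Dom ↔ (Nat.Partrec.Code.evaln (ψ d 2) e n).isSome) := by
  exact halting_bound_from_modulus_general ψ hψ two_pos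
end
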